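/- Fix integers ℓ≥1 and n≥1, and let 0≤m≤n−1. Then Σ_{σ ∈ G_{ℓ,n}^{m+1}} q^{fmaf σ} x^{fix σ} = Σ_{σ ∈ G_{ℓ,n}^{m}} q^{fmaf σ} x^{fix σ} + x·q^{ℓ(n−m−1)} · Σ_{σ ∈ G_{ℓ,n−1}^{m}} q^{fmaf σ} x^{fix σ}. -/

import Mathlib

/-!
The colored permutations counted on the left but not in the first sum on the right are those whose
smallest fixed point is `p = n - m - 1` (0-based). Deleting it is a bijection onto the colored
permutations of size `n - 1` without a fixed point below `p`, inverted by inserting the fixed point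
`p`. The insertion preserves the derangement part and the colors and moves each of the `k` old fixed
points up by one place and by one index, so that `∑ (i_j - j)` only gains the contribution `p` of
the new fixed point. Hence `fmaf` grows by `ℓ p` and `fix` by one, which is the factor
`x q^{ℓ(n-m-1)}`.
-/

open Finset

/-- A colored permutation in `G_{ℓ,n} ≅ C_ℓ ≀ S_n`: an underlying permutation of `Fin n`
together with a color (exponent of `ζ`) attached to each position. The letter at (0-based)
position `i` of the word of `σ` is `ζ^(σ.2 i) · (σ.1 i + 1)` (1-based value `σ.1 i + 1`). -/
abbrev CP (ℓ n : ℕ) := Equiv.Perm (Fin n) × (Fin n → Fin ℓ)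

namespace CP

variable {ℓ n : ℕ}

/-- `gtLetter a b` : the letter `a = (colorIndex, value)` is greater than `b` in the order
`1 > ζ > ⋯ > ζ^{ℓ-1}` on colors, colors compared first. -/
def gtLetter (a b : ℕ × ℕ) : Prop := a.1 < b.1 ∨ (a.1 = b.1 ∧ b.2 < a.2)

instance (a b : ℕ × ℕ) : Decidable (gtLetter a b) := by unfold gtLetter; infer_instance

/-- The letter (color index, 0-based absolute value) at 0-based position `i`. -/
def letter (σ : CP ℓ n) (i : ℕ) : ℕ × ℕ :=
  if h : i < n then ((σ.2 ⟨i, h⟩ : ℕ), (σ.1 ⟨i, h⟩ : ℕ)) else (0, 0)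

/-- 0-based descent positions : `i < n-1` such that `x_{i+1} > x_{i+2}` (1-based positions). -/
def desSet (σ : CP ℓ n) : Finset ℕ :=
  (range (n - 1)).filter fun i => gtLetter (letter σ i) (letter σ (i + 1))

/-- Major index: sum of the (1-based) descent places. -/
def maj (σ : CP ℓ n) : ℕ := ∑ i ∈ desSet σ, (i + 1)

/-- Number of descents. -/
def des (σ : CP ℓ n) : ℕ := (desSet σ).card

/-- `col σ = Σ_j j·#{i : ε_{x_i} = ζ^j}`. -/
def col (σ : CP ℓ n) : ℕ := ∑ i, (σ.2 i : ℕ)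

/-- flag major index. -/
def fmaj (σ : CP ℓ n) : ℕ := ℓ * maj σ + col σ

/-- The set of fixed points (position fixed and color `ζ^0 = 1`). -/
def fixSet (σ : CP ℓ n) : Finset (Fin n) :=
  univ.filter fun i => σ.1 i = i ∧ (σ.2 i : ℕ) = 0

def fix (σ : CP ℓ n) : ℕ := (fixSet σ).card

/-- Number of excedances `x_i > i`. -/
def exc (σ : CP ℓ n) : ℕ :=
  (univ.filter fun i : Fin n => (σ.2 i : ℕ) = 0 ∧ (i : ℕ) < (σ.1 i : ℕ)).card

lemma card_nonfix (σ : CP ℓ n) : ((fixSet σ)ᶜ).card = n - fix σ := by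
  rw [Finset.card_compl, fix, Fintype.card_fin]

lemma card_vals (σ : CP ℓ n) : (((fixSet σ)ᶜ).image σ.1).card = n - fix σ := by
  rw [Finset.card_image_of_injective _ σ.1.injective, card_nonfix]

/-- The bijection from nonfixed positions to the set of their values. -/
def derMid (σ : CP ℓ n) :
    {x // x ∈ ((fixSet σ)ᶜ : Finset (Fin n))} ≃ {x // x ∈ ((fixSet σ)ᶜ).image σ.1} where
  toFun p := ⟨σ.1 p.1, Finset.mem_image_of_mem _ p.2⟩
  invFun v := ⟨σ.1.symm v.1, by
    obtain ⟨p, hp, hpv⟩ := Finset.mem_image.mp v.2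
    simpa [← hpv] using hp⟩
  left_inv p := by simp
  right_inv v := by simp

/-- The derangement part `Der σ`: delete the fixed points of the word of `σ`, replace each
absolute value by its rank among the remaining values, and keep the colors. -/
def Der (σ : CP ℓ n) : CP ℓ (n - fix σ) :=
  let eP := ((fixSet σ)ᶜ).orderIsoOfFin (card_nonfix σ)
  let eV := (((fixSet σ)ᶜ).image σ.1).orderIsoOfFin (card_vals σ)
  (eP.toEquiv.trans ((derMid σ).trans eV.toEquiv.symm), fun i => σ.2 (eP i))

/-- `maf σ = maj (Der σ) + Σ_{j=1}^k (i_j − j)` over the (1-based) fixed points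
`i_1 < ⋯ < i_k`; with 0-based fixed positions this is `Σ f − k(k−1)/2`. -/
def maf (σ : CP ℓ n) : ℕ := maj (Der σ) + ((∑ i ∈ fixSet σ, (i : ℕ)) - (fix σ).choose 2)

/-- flag maf. -/
def fmaf (σ : CP ℓ n) : ℕ := ℓ * maf σ + col σ

end CP

/-- The q-integer `[k]_q = 1 + q + ⋯ + q^{k-1}`. -/
def qint {R : Type*} [CommSemiring R] (q : R) (k : ℕ) : R := ∑ i ∈ range k, q ^ i

namespace CP

variable {ℓ n : ℕ}

lemma mem_fixSet {σ : CP ℓ n} {i : Fin n} : i ∈ fixSet σ ↔ σ.1 i = i ∧ (σ.2 i : ℕ) = 0 := by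
  simp [fixSet]

/-- The subtraction in `maf` does not truncate. -/
lemma choose_fix_two_le_sum_fixSet (σ : CP ℓ n) :
    (fix σ).choose 2 ≤ ∑ i ∈ fixSet σ, (i : ℕ) := by
  have h := Finset.sum_range_le_sum (c := 0)
    (s := (fixSet σ).map (Fin.valEmbedding.trans Nat.castEmbedding)) (by simp)
  simp only [zero_add, card_map, sum_map, Function.Embedding.trans_apply,
    Fin.valEmbedding_apply, Nat.castEmbedding_apply] at h
  rw [Nat.choose_two_right, ← Finset.sum_range_id]
  zify
  exact h

lemma letter_val (σ : CP ℓ n) (i : Fin n) : letter σ i = ((σ.2 i : ℕ), (σ.1 i : ℕ)) := by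
  simp [letter]

lemma gtLetter_letter_iff_of_lt_iff {ℓ' k : ℕ} {σ : CP ℓ n} {τ : CP ℓ' k} {i j : Fin n}
    {i' j' : Fin k} (hi : (σ.2 i : ℕ) = τ.2 i') (hj : (σ.2 j : ℕ) = τ.2 j')
    (hlt : σ.1 j < σ.1 i ↔ τ.1 j' < τ.1 i') :
    gtLetter (letter σ i) (letter σ j) ↔ gtLetter (letter τ i') (letter τ j') := by
  simp only [letter_val, gtLetter, hi, hj, ← Fin.lt_def, hlt]

lemma maj_eq_of_gtLetter_iff {ℓ' k : ℕ} (h : k = n) {σ : CP ℓ k} {τ : CP ℓ' n}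
    (hgt : ∀ i j : Fin k, gtLetter (letter σ i) (letter σ j) ↔
      gtLetter (letter τ (i.cast h)) (letter τ (j.cast h))) :
    maj σ = maj τ := by
  subst h
  refine Finset.sum_congr (Finset.filter_congr fun i hi => ?_) fun _ _ => rfl
  rw [mem_range] at hi
  exact hgt ⟨i, by omega⟩ ⟨i + 1, by omega⟩

/-- The increasing enumeration of the positions of `σ` that survive in `Der σ`. -/
def nonfixEmb (σ : CP ℓ n) : Fin (n - fix σ) ↪o Fin n :=
  (fixSet σ)ᶜ.orderEmbOfFin (card_nonfix σ)

lemma nonfixEmb_notMem_fixSet (σ : CP ℓ n) (i : Fin (n - fix σ)) : nonfixEmb σ i ∉ fixSet σ :=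
  mem_compl.mp (orderEmbOfFin_mem _ _ i)

lemma Der_fst_lt_iff (σ : CP ℓ n) (i j : Fin (n - fix σ)) :
    (Der σ).1 i < (Der σ).1 j ↔ σ.1 (nonfixEmb σ i) < σ.1 (nonfixEmb σ j) := by
  simp [Der, derMid, nonfixEmb]

lemma gtLetter_letter_Der (σ : CP ℓ n) (i j : Fin (n - fix σ)) :
    gtLetter (letter (Der σ) i) (letter (Der σ) j) ↔
      gtLetter (letter σ (nonfixEmb σ i)) (letter σ (nonfixEmb σ j)) :=
  gtLetter_letter_iff_of_lt_iff rfl rfl (Der_fst_lt_iff σ j i)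

/-- The colored permutations without a fixed point at a (0-based) position below `p`. The paper's
`G_{ℓ,n}^m` is `noFixBelow ℓ n (n - m)`. -/
def noFixBelow (ℓ n p : ℕ) : Finset (CP ℓ n) :=
  {σ | ∀ i ∈ fixSet σ, p ≤ i}

lemma mem_noFixBelow {p : ℕ} {σ : CP ℓ n} : σ ∈ noFixBelow ℓ n p ↔ ∀ i ∈ fixSet σ, p ≤ i := by
  simp [noFixBelow]

lemma noFixBelow_eq_filter_not (ℓ n p : ℕ) :
    noFixBelow ℓ n p = (univ : Finset (CP ℓ n)).filter
      fun σ => ∀ i : Fin n, (i : ℕ) < p → ¬(σ.1 i = i ∧ (σ.2 i : ℕ) = 0) :=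
  filter_congr fun σ _ => forall_congr' fun i => by rw [← mem_fixSet, imp_not_comm, not_lt]

lemma filter_notMem_fixSet_noFixBelow (p : Fin n) :
    {σ ∈ noFixBelow ℓ n p | p ∉ fixSet σ} = noFixBelow ℓ n (p + 1) := by
  ext σ
  simp only [mem_filter, mem_noFixBelow, Nat.succ_le_iff]
  constructor
  · rintro ⟨hle, hp⟩ i hi
    exact (hle i hi).lt_of_ne fun h => hp (Fin.ext h ▸ hi)
  · exact fun hlt => ⟨fun i hi => (hlt i hi).le, fun hp => (hlt p hp).false⟩

/-- Insertion of the fixed point `p`: positions and values at least `p` are shifted up by one, and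
the new letter `p` receives the color `ζ^0 = 1`. The first component extends `τ.1` by `none ↦ none`
and transports it along `Fin (n + 1) ≃ Option (Fin n)`, `p ↦ none`. -/
def insertFixed [NeZero ℓ] (p : Fin (n + 1)) (τ : CP ℓ n) : CP ℓ (n + 1) :=
  ((finSuccEquiv' p).symm.permCongr τ.1.optionCongr, p.insertNth (α := fun _ => Fin ℓ) 0 τ.2)

/-- Deletion of position `p`, inverse to `insertFixed p` on the colored permutations that fix `p`.
For other `σ` the value `σ.1 p` takes the place of `p` in the underlying permutation. -/
def deleteFixed (p : Fin (n + 1)) (σ : CP ℓ (n + 1)) : CP ℓ n :=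
  (((finSuccEquiv' p).permCongr σ.1).removeNone, p.removeNth σ.2)

section InsertFixed

variable [NeZero ℓ] (p : Fin (n + 1)) (τ : CP ℓ n)

@[simp] lemma insertFixed_fst_self : (insertFixed p τ).1 p = p := by simp [insertFixed]

@[simp] lemma insertFixed_fst_succAbove (j : Fin n) :
    (insertFixed p τ).1 (p.succAbove j) = p.succAbove (τ.1 j) := by simp [insertFixed]

@[simp] lemma insertFixed_snd_self : (insertFixed p τ).2 p = 0 := by simp [insertFixed]

@[simp] lemma insertFixed_snd_succAbove (j : Fin n) :
    (insertFixed p τ).2 (p.succAbove j) = τ.2 j := by simp [insertFixed]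

lemma deleteFixed_insertFixed : deleteFixed p (insertFixed p τ) = τ := by
  simp [deleteFixed, insertFixed, ← Equiv.permCongr_symm]

lemma insertFixed_deleteFixed {σ : CP ℓ (n + 1)} (hp : p ∈ fixSet σ) :
    insertFixed p (deleteFixed p σ) = σ := by
  rw [mem_fixSet, Fin.val_eq_zero_iff] at hp
  refine Prod.ext ?_ ?_
  · simp [insertFixed, deleteFixed, map_equiv_removeNone, ← Equiv.permCongr_symm,
      ← Equiv.Perm.one_def, hp.1]
  · simp [insertFixed, deleteFixed, ← hp.2]

lemma fixSet_insertFixed : fixSet (insertFixed p τ) = insert p ((fixSet τ).map p.succAboveEmb) := by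
  ext i
  cases i using p.succAboveCases <;> simp [mem_fixSet, Fin.succAbove_ne]

lemma sum_fixSet_insertFixed {M : Type*} [AddCommMonoid M] (f : Fin (n + 1) → M) :
    ∑ i ∈ fixSet (insertFixed p τ), f i = f p + ∑ j ∈ fixSet τ, f (p.succAbove j) := by
  rw [fixSet_insertFixed, sum_insert (by simp [Fin.succAbove_ne]), sum_map]
  rfl

lemma fix_insertFixed : fix (insertFixed p τ) = fix τ + 1 := by
  rw [fix, card_eq_sum_ones, sum_fixSet_insertFixed, ← card_eq_sum_ones, ← fix, add_comm]

lemma col_insertFixed : col (insertFixed p τ) = col τ := by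
  simp [col, Fin.sum_univ_succAbove _ p]

lemma gtLetter_letter_insertFixed (i j : Fin n) :
    gtLetter (letter (insertFixed p τ) (p.succAbove i))
        (letter (insertFixed p τ) (p.succAbove j)) ↔
      gtLetter (letter τ i) (letter τ j) :=
  gtLetter_letter_iff_of_lt_iff (by simp) (by simp) (by simp)

lemma sub_fix_insertFixed : n + 1 - fix (insertFixed p τ) = n - fix τ := by
  rw [fix_insertFixed, Nat.add_sub_add_right]

lemma nonfixEmb_insertFixed (i : Fin (n + 1 - fix (insertFixed p τ))) :
    nonfixEmb (insertFixed p τ) i =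
      p.succAbove (nonfixEmb τ (i.cast (sub_fix_insertFixed p τ))) := by
  let e : Fin (n + 1 - fix (insertFixed p τ)) ↪o Fin (n + 1) :=
    (Fin.castOrderIso (sub_fix_insertFixed p τ)).toOrderEmbedding.trans
      ((nonfixEmb τ).trans p.succAboveOrderEmb)
  have he : ∀ j, e j ∈ (fixSet (insertFixed p τ))ᶜ := fun j => by
    simp [e, fixSet_insertFixed, Fin.succAbove_ne, nonfixEmb_notMem_fixSet]
  exact (DFunLike.congr_fun (orderEmbOfFin_unique' _ he) i).symm

lemma maj_Der_insertFixed : maj (Der (insertFixed p τ)) = maj (Der τ) :=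
  maj_eq_of_gtLetter_iff (sub_fix_insertFixed p τ) fun i j => by
    rw [gtLetter_letter_Der, nonfixEmb_insertFixed, nonfixEmb_insertFixed,
      gtLetter_letter_insertFixed, gtLetter_letter_Der]

variable {τ}

lemma insertFixed_mem_noFixBelow :
    insertFixed p τ ∈ noFixBelow ℓ (n + 1) p ↔ τ ∈ noFixBelow ℓ n p := by
  have hle (j : Fin n) : p ≤ p.succAbove j ↔ (p : ℕ) ≤ j := by
    rw [(Fin.ne_succAbove p j).le_iff_lt, Fin.lt_succAbove_iff_le_castSucc]
    rfl
  simp [mem_noFixBelow, fixSet_insertFixed, hle]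

lemma sum_filter_mem_fixSet_noFixBelow {M : Type*} [AddCommMonoid M] (f : CP ℓ (n + 1) → M) :
    ∑ σ ∈ noFixBelow ℓ (n + 1) p with p ∈ fixSet σ, f σ =
      ∑ τ ∈ noFixBelow ℓ n p, f (insertFixed p τ) := by
  symm
  refine sum_nbij' (insertFixed p) (deleteFixed p) (fun τ hτ => ?_) (fun σ hσ => ?_)
    (fun τ _ => deleteFixed_insertFixed p τ) (fun σ hσ => ?_) fun _ _ => rfl
  · exact mem_filter.mpr ⟨(insertFixed_mem_noFixBelow p).mpr hτ, by simp [fixSet_insertFixed]⟩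
  · rw [mem_filter] at hσ
    rw [← insertFixed_mem_noFixBelow, insertFixed_deleteFixed p hσ.2]
    exact hσ.1
  · exact insertFixed_deleteFixed p (mem_filter.mp hσ).2

lemma sum_val_fixSet_insertFixed (hτ : τ ∈ noFixBelow ℓ n p) :
    ∑ i ∈ fixSet (insertFixed p τ), (i : ℕ) = p + (∑ j ∈ fixSet τ, (j : ℕ) + fix τ) := by
  have hshift : ∀ j ∈ fixSet τ, (p.succAbove j : ℕ) = j + 1 := fun j hj => by
    rw [Fin.succAbove_of_le_castSucc p j (mem_noFixBelow.mp hτ j hj), Fin.val_succ]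
  rw [sum_fixSet_insertFixed, sum_congr rfl hshift, sum_add_distrib, ← card_eq_sum_ones, fix]

lemma maf_insertFixed (hτ : τ ∈ noFixBelow ℓ n p) :
    maf (insertFixed p τ) = maf τ + p := by
  have hle := choose_fix_two_le_sum_fixSet τ
  have hchoose : (fix τ + 1).choose 2 = fix τ + (fix τ).choose 2 := by
    rw [Nat.choose_succ_succ', Nat.choose_one_right]
  rw [maf, maf, maj_Der_insertFixed, sum_val_fixSet_insertFixed p hτ, fix_insertFixed, hchoose]
  omega

lemma fmaf_insertFixed (hτ : τ ∈ noFixBelow ℓ n p) :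
    fmaf (insertFixed p τ) = fmaf τ + ℓ * p := by
  rw [fmaf, fmaf, maf_insertFixed p hτ, col_insertFixed]
  ring

end InsertFixed

end CP

theorem fmaf_fix_sum_recurrence_general {R : Type*} [CommSemiring R] (q x : R) {ℓ n : ℕ} [NeZero ℓ]
    (p : Fin (n + 1)) :
    ∑ σ ∈ CP.noFixBelow ℓ (n + 1) p, q ^ CP.fmaf σ * x ^ CP.fix σ =
      ∑ σ ∈ CP.noFixBelow ℓ (n + 1) (p + 1), q ^ CP.fmaf σ * x ^ CP.fix σ +
        x * q ^ (ℓ * p) * ∑ τ ∈ CP.noFixBelow ℓ n p, q ^ CP.fmaf τ * x ^ CP.fix τ := by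
  rw [← sum_filter_not_add_sum_filter _ (p ∈ CP.fixSet ·), CP.filter_notMem_fixSet_noFixBelow,
    CP.sum_filter_mem_fixSet_noFixBelow, mul_sum]
  congr 1
  refine sum_congr rfl fun τ hτ => ?_
  rw [CP.fmaf_insertFixed p hτ, CP.fix_insertFixed]
  ring

open MvPolynomial in
/-- With `G_{ℓ,n}^m = {σ ∈ G_{ℓ,n} : σ(i) ≠ i for all i ≤ n−m}`,
`Σ_{σ ∈ G_{ℓ,n}^{m+1}} q^{fmaf σ} x^{fix σ}
 = Σ_{σ ∈ G_{ℓ,n}^{m}} q^{fmaf σ} x^{fix σ}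
   + x·q^{ℓ(n−m−1)} Σ_{σ ∈ G_{ℓ,n−1}^{m}} q^{fmaf σ} x^{fix σ}`. -/
theorem fmaf_fix_sum_recurrence (ℓ n : ℕ) (hℓ : 1 ≤ ℓ) (hn : 1 ≤ n)
    (m : ℕ) (hm : m ≤ n - 1) :
    (∑ σ ∈ (univ : Finset (CP ℓ n)).filter
        (fun σ => ∀ i : Fin n, (i : ℕ) < n - (m + 1) → ¬(σ.1 i = i ∧ (σ.2 i : ℕ) = 0)),
      (X 0 : MvPolynomial (Fin 2) ℤ) ^ CP.fmaf σ * (X 1) ^ CP.fix σ) =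
    (∑ σ ∈ (univ : Finset (CP ℓ n)).filter
        (fun σ => ∀ i : Fin n, (i : ℕ) < n - m → ¬(σ.1 i = i ∧ (σ.2 i : ℕ) = 0)),
      (X 0 : MvPolynomial (Fin 2) ℤ) ^ CP.fmaf σ * (X 1) ^ CP.fix σ) +
    (X 1) * (X 0 : MvPolynomial (Fin 2) ℤ) ^ (ℓ * (n - m - 1)) *
      (∑ σ ∈ (univ : Finset (CP ℓ (n - 1))).filter
          (fun σ => ∀ i : Fin (n - 1), (i : ℕ) < (n - 1) - m → ¬(σ.1 i = i ∧ (σ.2 i : ℕ) = 0)),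
        (X 0 : MvPolynomial (Fin 2) ℤ) ^ CP.fmaf σ * (X 1) ^ CP.fix σ) := by
  have : NeZero ℓ := ⟨by omega⟩
  obtain ⟨n, rfl⟩ := Nat.exists_eq_add_of_le' hn
  rw [Nat.add_sub_cancel] at hm ⊢
  simpa only [CP.noFixBelow_eq_filter_not, Nat.add_sub_cancel, Nat.add_sub_add_right,
    Nat.sub_add_comm hm] using
    fmaf_fix_sum_recurrence_general (X 0 : MvPolynomial (Fin 2) ℤ) (X 1) (ℓ := ℓ)
      (⟨n - m, by omega⟩ : Fin (n + 1))
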